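/- In the gluing setup, for every pair of distinct f, g ∈ 𝔉, every x ∈ V_f \ V_p, and every y ∈ V_g \ V_p, we have d̂(x,y) − ď(x,y) ≥ min{ Λ(x; V_f ∩ V_p), Λ(y; V_p ∩ V_g) }, where Λ(v;B) = inf{ d̂(a,v) + d̂(v,b) − d̂(a,b) : a,b ∈ B }. -/

import Mathlib

open scoped Classical

universe u

namespace GraphMetricPaper

variable {X : Type u}

/-- The vertex set `V = ⋃ E` of a graph given by an adjacency relation `E`. -/
def Vtx (E : X → X → Prop) : Set X := {x | ∃ y, E x y}

/-- Two points are joined by a walk in the graph `E`. -/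
def Joined (E : X → X → Prop) (x y : X) : Prop :=
  ∃ (n : ℕ) (c : ℕ → X), c 0 = x ∧ c n = y ∧ ∀ i, i < n → E (c i) (c (i + 1))

/-- The set of weights of walks from `x` to `y`. -/
def walkSums (E : X → X → Prop) (d : X → X → ℝ) (x y : X) : Set ℝ :=
  {s | ∃ (n : ℕ) (c : ℕ → X), c 0 = x ∧ c n = y ∧ (∀ i, i < n → E (c i) (c (i + 1))) ∧
    s = ∑ i ∈ Finset.range n, d (c i) (c (i + 1))}

/-- The shortest-path pseudometric `d̂` determined by a weight function `d` on a graph `E`. -/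
noncomputable def hatd (E : X → X → Prop) (d : X → X → ℝ) (x y : X) : ℝ :=
  sInf (walkSums E d x y)

/-- The function `ď` bounding the possible extensions of `d` from below:
`ď(x,y) = sup_{ab ∈ E} max {0, d(ab) - d̂(a,x) - d̂(y,b)}`. -/
noncomputable def checkd (E : X → X → Prop) (d : X → X → ℝ) (x y : X) : ℝ :=
  sSup ({0} ∪ {r | ∃ a b, E a b ∧ r = d a b - hatd E d a x - hatd E d y b})

/-- The pseudometric `d̈` on doubletons:
`d̈(xy,uv) = min {d̂(x,u) + d̂(y,v), d̂(x,v) + d̂(y,u)}`. -/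
noncomputable def ddot (E : X → X → Prop) (d : X → X → ℝ) (x y u v : X) : ℝ :=
  min (hatd E d x u + hatd E d y v) (hatd E d x v + hatd E d y u)

/-- `d` is a graph pseudometric with edge relation `E`:  `E` is a (symmetric, irreflexive)
connected graph, `d` is a nonnegative symmetric weight on the edges, and `d = d̂` on edges. -/
structure IsGraphPseudometric (E : X → X → Prop) (d : X → X → ℝ) : Prop where
  symm : ∀ ⦃a b⦄, E a b → E b a
  irrefl : ∀ a, ¬ E a a
  wt_symm : ∀ ⦃a b⦄, E a b → d a b = d b a
  nonneg : ∀ ⦃a b⦄, E a b → 0 ≤ d a b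
  connected : ∀ x ∈ Vtx E, ∀ y ∈ Vtx E, Joined E x y
  edge_eq : ∀ ⦃a b⦄, E a b → d a b = hatd E d a b

/-- A graph metric is a graph pseudometric with strictly positive weights. -/
def IsGraphMetric (E : X → X → Prop) (d : X → X → ℝ) : Prop :=
  IsGraphPseudometric E d ∧ ∀ ⦃a b⦄, E a b → 0 < d a b

/-- A floppy graph pseudometric: `ď(x,y) < d̂(x,y)` for every `xy ∈ [V]² \ E`. -/
def FloppyPseudometric (E : X → X → Prop) (d : X → X → ℝ) : Prop :=
  IsGraphPseudometric E d ∧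
    ∀ x ∈ Vtx E, ∀ y ∈ Vtx E, x ≠ y → ¬ E x y → checkd E d x y < hatd E d x y

/-- A floppy graph metric: `ď(x,y) < d̂(x,y)` for every `xy ∈ [V]² \ E`. -/
def FloppyMetric (E : X → X → Prop) (d : X → X → ℝ) : Prop :=
  IsGraphMetric E d ∧
    ∀ x ∈ Vtx E, ∀ y ∈ Vtx E, x ≠ y → ¬ E x y → checkd E d x y < hatd E d x y

/-- The edge relation of the one-step extension `E ∪ {xy}`. -/
def extEdge (E : X → X → Prop) (x y : X) : X → X → Prop :=
  fun a b => E a b ∨ (a = x ∧ b = y) ∨ (a = y ∧ b = x)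

/-- The weight function of the one-step extension `d ∪ {⟨xy, r⟩}`. -/
noncomputable def extWt (d : X → X → ℝ) (x y : X) (r : ℝ) : X → X → ℝ :=
  fun a b => if (a = x ∧ b = y) ∨ (a = y ∧ b = x) then r else d a b

/-- The set `[V]² \ E` of unordered pairs of distinct vertices that are not edges. -/
def nonEdgePairs (E : X → X → Prop) : Set (Sym2 X) :=
  {e | ∃ a b : X, e = s(a, b) ∧ a ≠ b ∧ a ∈ Vtx E ∧ b ∈ Vtx E ∧ ¬ E a b}

/-- A set of (unordered) weighted pairs, presented as a relation `R`, is a full metric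
on `V`: it is symmetric, its domain is exactly `[V]²`, it is single-valued, positive,
and satisfies the triangle inequality. -/
def IsFullMetricRel (V : Set X) (R : X → X → ℝ → Prop) : Prop :=
  (∀ a b r, R a b r → R b a r) ∧
  (∀ a b r, R a b r → a ∈ V ∧ b ∈ V ∧ a ≠ b) ∧
  (∀ a b, a ∈ V → b ∈ V → a ≠ b → ∃ r, R a b r) ∧
  (∀ a b r s, R a b r → R a b s → r = s) ∧
  (∀ a b r, R a b r → 0 < r) ∧
  (∀ a b c r s t, R a b r → R b c s → R a c t → t ≤ r + s)

/-- A weight function `D` on `[V]²` is a full metric on `V`. -/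
def IsFullMetricOn (V : Set X) (D : X → X → ℝ) : Prop :=
  (∀ a b, a ∈ V → b ∈ V → a ≠ b → D a b = D b a) ∧
  (∀ a b, a ∈ V → b ∈ V → a ≠ b → 0 < D a b) ∧
  (∀ a b c, a ∈ V → b ∈ V → c ∈ V → a ≠ b → b ≠ c → a ≠ c → D a c ≤ D a b + D b c)

/-- Player I has a winning strategy in the metric-extending game `Game_d(lam, Fam)`:
there are functions `S1, S2` choosing, for each inning `β < lam` and each sequence of
previous answers of player II, a legal doubleton in `[V]²` and a set from `Fam`, such that
for every play of player II respecting the strategy, the resulting relation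
`d ∪ {⟨x_α y_α, r_α⟩ : α < lam}` is a full metric on `V`. -/
def WinningStratI (V : Set X) (E : X → X → Prop) (d : X → X → ℝ)
    (lam : Ordinal.{u}) (Fam : Set (Set ℝ)) : Prop :=
  ∃ (S1 : ∀ β : Ordinal.{u}, β < lam → (∀ α : Ordinal.{u}, α < β → ℝ) → X × X)
    (S2 : ∀ β : Ordinal.{u}, β < lam → (∀ α : Ordinal.{u}, α < β → ℝ) → Set ℝ),
    (∀ β hβ s, S2 β hβ s ∈ Fam) ∧
    (∀ β hβ s, (S1 β hβ s).1 ∈ V ∧ (S1 β hβ s).2 ∈ V ∧ (S1 β hβ s).1 ≠ (S1 β hβ s).2) ∧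
    (∀ s : ∀ α : Ordinal.{u}, α < lam → ℝ,
      (∀ α (hα : α < lam), s α hα ∈ S2 α hα (fun γ hγ => s γ (hγ.trans hα))) →
      IsFullMetricRel V (fun a b r =>
        (E a b ∧ r = d a b) ∨
        ∃ α, ∃ hα : α < lam,
          ((a = (S1 α hα (fun γ hγ => s γ (hγ.trans hα))).1 ∧
            b = (S1 α hα (fun γ hγ => s γ (hγ.trans hα))).2) ∨
           (a = (S1 α hα (fun γ hγ => s γ (hγ.trans hα))).2 ∧
            b = (S1 α hα (fun γ hγ => s γ (hγ.trans hα))).1)) ∧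
          r = s α hα))

/-- Player II has a winning strategy in the metric-extending game `Game_d(lam, Fam)`:
there is a function `T` assigning to each inning `β < lam` and each sequence of moves of
player I (of length `β + 1`) an answer in the set component of the last move, such that
for every legal play of player I, the resulting relation is not a full metric on `V`. -/
def WinningStratII (V : Set X) (E : X → X → Prop) (d : X → X → ℝ)
    (lam : Ordinal.{u}) (Fam : Set (Set ℝ)) : Prop :=
  ∃ T : ∀ β : Ordinal.{u}, β < lam → (∀ α : Ordinal.{u}, α ≤ β → (X × X) × Set ℝ) → ℝ,
    (∀ β hβ p, (p β le_rfl).2 ∈ Fam → T β hβ p ∈ (p β le_rfl).2) ∧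
    (∀ p : ∀ α : Ordinal.{u}, α < lam → (X × X) × Set ℝ,
      (∀ α hα, (p α hα).1.1 ∈ V ∧ (p α hα).1.2 ∈ V ∧ (p α hα).1.1 ≠ (p α hα).1.2 ∧
        (p α hα).2 ∈ Fam) →
      ¬ IsFullMetricRel V (fun a b r =>
        (E a b ∧ r = d a b) ∨
        ∃ α, ∃ hα : α < lam,
          ((a = (p α hα).1.1 ∧ b = (p α hα).1.2) ∨
           (a = (p α hα).1.2 ∧ b = (p α hα).1.1)) ∧
          r = T α hα (fun γ hγ => p γ (lt_of_le_of_lt hγ hα))))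

/-- The edge relation of the glued graph `E_d = E_p ∪ ⋃_{f ∈ F} E_f`. -/
def gluedEdge (Ep : X → X → Prop) (F : Set ((X → X → Prop) × (X → X → ℝ))) :
    X → X → Prop :=
  fun a b => Ep a b ∨ ∃ f ∈ F, f.1 a b

/-- `Λ(v; B) = inf {d̂(a,v) + d̂(v,b) - d̂(a,b) : a, b ∈ B}`. -/
noncomputable def Lam (E : X → X → Prop) (d : X → X → ℝ) (v : X) (B : Set X) : ℝ :=
  sInf {r | ∃ a ∈ B, ∃ b ∈ B, r = hatd E d a v + hatd E d v b - hatd E d a b}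

/-- The gluing setup: a graph pseudometric `p = (Ep, wp)` and a family `F` of graph
pseudometrics such that each member meets `V_p`, agrees with `p̂` on the intersection of
the vertex sets, and distinct members only meet inside `V_p`; `wd` is the glued weight
function `d = p ∪ ⋃ F` on `E_d = E_p ∪ ⋃_{f ∈ F} E_f`. -/
structure GluingSetup (Ep : X → X → Prop) (wp : X → X → ℝ)
    (F : Set ((X → X → Prop) × (X → X → ℝ))) (wd : X → X → ℝ) : Prop where
  hp : IsGraphPseudometric Ep wp
  hF : ∀ f ∈ F, IsGraphPseudometric f.1 f.2
  meet : ∀ f ∈ F, (Vtx f.1 ∩ Vtx Ep).Nonempty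
  agree : ∀ f ∈ F, ∀ x ∈ Vtx f.1 ∩ Vtx Ep, ∀ y ∈ Vtx f.1 ∩ Vtx Ep, x ≠ y →
    hatd f.1 f.2 x y = hatd Ep wp x y
  inter_sub : ∀ f ∈ F, ∀ g ∈ F, f ≠ g → Vtx f.1 ∩ Vtx g.1 ⊆ Vtx Ep
  wd_p : ∀ ⦃a b⦄, Ep a b → wd a b = wp a b
  wd_F : ∀ f ∈ F, ∀ ⦃a b⦄, f.1 a b → wd a b = f.2 a b

/-!
Each piece `k` of the glued graph (the base `p` or a member of `𝔉`) keeps its own shortest-path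
distance: an edge at a vertex of `V_k \ V_p` belongs to `k`, so a walk can leave `k` only through
`V_k ∩ V_p`, and an excursion between two points of `V_k ∩ V_p` costs at least their `p`-distance,
which is their `k`-distance. Hence the glued weight is again a graph pseudometric, and `V_k ∩ V_p`
metrically separates `V_k` from the vertices outside `V_k \ V_p`.

For an edge `ab`, either `a ∉ V_f \ V_p` or `b ∉ V_g \ V_p`. In the first case near-geodesics from
`x` to `a` and to `y` pass through points `u, v ∈ V_f ∩ V_p`, and the excess
`d̂(u,x) + d̂(x,v) - d̂(u,v)` is at least `Λ(x; V_f ∩ V_p)`; the second case is the same with `y` in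
place of `x`.
-/

section Walks

variable {E : X → X → Prop} {d : X → X → ℝ} {x y z : X} {s t : ℝ}

lemma zero_mem_walkSums (x : X) : (0 : ℝ) ∈ walkSums E d x x :=
  ⟨0, fun _ => x, rfl, rfl, by simp, by simp⟩

lemma cons_mem_walkSums (hxy : E x y) (hs : s ∈ walkSums E d y z) :
    d x y + s ∈ walkSums E d x z := by
  obtain ⟨n, c, hc₀, hcn, hc, rfl⟩ := hs
  refine ⟨n + 1, fun i => Nat.casesOn i x c, rfl, hcn, ?_, ?_⟩
  · rintro (_ | i) hi
    · simpa [hc₀] using hxy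
    · exact hc i (by omega)
  · simp [Finset.sum_range_succ', add_comm, hc₀]

@[elab_as_elim]
lemma walkSums_induction {motive : (x : X) → (s : ℝ) → s ∈ walkSums E d x z → Prop}
    (nil : motive z 0 (zero_mem_walkSums z))
    (cons : ∀ x y s (hxy : E x y) (hs : s ∈ walkSums E d y z),
      motive y s hs → motive x (d x y + s) (cons_mem_walkSums hxy hs))
    {x : X} {s : ℝ} (hs : s ∈ walkSums E d x z) : motive x s hs := by
  obtain ⟨n, c, rfl, rfl, hc, hsum⟩ := id hs
  induction n generalizing c s with
  | zero =>
    obtain rfl : s = 0 := by simpa using hsum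
    exact nil
  | succ n ih =>
    have hc' : ∀ i < n, E (c (i + 1)) (c (i + 1 + 1)) := fun i hi => hc (i + 1) (by omega)
    rw [Finset.sum_range_succ', add_comm] at hsum
    subst hsum
    exact cons _ (c 1) _ (hc 0 n.succ_pos) ⟨n, fun i => c (i + 1), rfl, rfl, hc', rfl⟩
      (ih _ nil cons _ hc' rfl)

lemma edge_mem_walkSums (hxy : E x y) : d x y ∈ walkSums E d x y := by
  simpa using cons_mem_walkSums hxy (zero_mem_walkSums (d := d) y)

lemma add_mem_walkSums (hs : s ∈ walkSums E d x y) (ht : t ∈ walkSums E d y z) :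
    s + t ∈ walkSums E d x z := by
  induction hs using walkSums_induction with
  | nil => simpa using ht
  | cons x w s hxw _ ih => simpa only [add_assoc] using cons_mem_walkSums hxw ih

lemma walkSums_subset_swap (hE : ∀ ⦃a b⦄, E a b → E b a)
    (hd : ∀ ⦃a b⦄, E a b → d a b = d b a) (x y : X) :
    walkSums E d x y ⊆ walkSums E d y x := by
  intro s hs
  induction hs using walkSums_induction with
  | nil => exact zero_mem_walkSums y
  | cons x w s hxw _ ih =>
    rw [add_comm, hd hxw]
    exact add_mem_walkSums ih (edge_mem_walkSums (hE hxw))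

lemma walkSums_mono {E' : X → X → Prop} {d' : X → X → ℝ} (hE : ∀ ⦃a b⦄, E a b → E' a b)
    (hd : ∀ ⦃a b⦄, E a b → d' a b = d a b) (x y : X) :
    walkSums E d x y ⊆ walkSums E' d' x y := by
  intro s hs
  induction hs using walkSums_induction with
  | nil => exact zero_mem_walkSums y
  | cons x w s hxw _ ih => exact hd hxw ▸ cons_mem_walkSums (hE hxw) ih

lemma nonneg_of_mem_walkSums (hd : ∀ ⦃a b⦄, E a b → 0 ≤ d a b) (hs : s ∈ walkSums E d x y) :
    0 ≤ s := by
  induction hs using walkSums_induction with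
  | nil => exact le_rfl
  | cons x w s hxw _ ih => exact add_nonneg (hd hxw) ih

lemma nonempty_walkSums_iff_joined : (walkSums E d x y).Nonempty ↔ Joined E x y :=
  ⟨fun ⟨_, n, c, hc₀, hcn, hc, _⟩ => ⟨n, c, hc₀, hcn, hc⟩,
    fun ⟨n, c, hc₀, hcn, hc⟩ => ⟨_, n, c, hc₀, hcn, hc, rfl⟩⟩

lemma joined_iff_reflTransGen : Joined E x y ↔ Relation.ReflTransGen E x y := by
  rw [← nonempty_walkSums_iff_joined (d := 0)]
  constructor
  · rintro ⟨s, hs⟩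
    induction hs using walkSums_induction with
    | nil => exact .refl
    | cons _ _ _ hxw _ ih => exact .head hxw ih
  · intro hxy
    induction hxy using Relation.ReflTransGen.head_induction_on with
    | refl => exact ⟨0, zero_mem_walkSums y⟩
    | head hxw _ ih => exact ⟨_, cons_mem_walkSums hxw ih.some_mem⟩

lemma hatd_le_of_mem_walkSums (hd : ∀ ⦃a b⦄, E a b → 0 ≤ d a b) (hs : s ∈ walkSums E d x y) :
    hatd E d x y ≤ s :=
  csInf_le ⟨0, fun _ => nonneg_of_mem_walkSums hd⟩ hs

end Walks

namespace IsGraphPseudometric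

variable {E : X → X → Prop} {d : X → X → ℝ} {x y z : X}

lemma right_mem_Vtx (h : IsGraphPseudometric E d) (hxy : E x y) : y ∈ Vtx E :=
  ⟨x, h.symm hxy⟩

lemma walkSums_comm (h : IsGraphPseudometric E d) (x y : X) :
    walkSums E d x y = walkSums E d y x :=
  (walkSums_subset_swap h.symm h.wt_symm x y).antisymm (walkSums_subset_swap h.symm h.wt_symm y x)

lemma hatd_comm (h : IsGraphPseudometric E d) (x y : X) : hatd E d x y = hatd E d y x := by
  rw [hatd, h.walkSums_comm, hatd]

lemma hatd_nonneg (h : IsGraphPseudometric E d) (x y : X) : 0 ≤ hatd E d x y :=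
  Real.sInf_nonneg fun _ => nonneg_of_mem_walkSums h.nonneg

lemma hatd_self (h : IsGraphPseudometric E d) (x : X) : hatd E d x x = 0 :=
  (hatd_le_of_mem_walkSums h.nonneg (zero_mem_walkSums x)).antisymm (h.hatd_nonneg x x)

lemma nonempty_walkSums (h : IsGraphPseudometric E d) (hx : x ∈ Vtx E) (hy : y ∈ Vtx E) :
    (walkSums E d x y).Nonempty :=
  nonempty_walkSums_iff_joined.2 (h.connected x hx y hy)

lemma exists_mem_walkSums_lt (h : IsGraphPseudometric E d) (hx : x ∈ Vtx E) (hy : y ∈ Vtx E)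
    {ε : ℝ} (hε : 0 < ε) : ∃ s ∈ walkSums E d x y, s < hatd E d x y + ε :=
  Real.lt_sInf_add_pos (h.nonempty_walkSums hx hy) hε

lemma hatd_triangle (h : IsGraphPseudometric E d) (hx : x ∈ Vtx E) (hy : y ∈ Vtx E)
    (hz : z ∈ Vtx E) : hatd E d x z ≤ hatd E d x y + hatd E d y z := by
  refine le_of_forall_pos_le_add fun ε hε => ?_
  obtain ⟨s, hs, hs_lt⟩ := h.exists_mem_walkSums_lt hx hy (half_pos hε)
  obtain ⟨t, ht, ht_lt⟩ := h.exists_mem_walkSums_lt hy hz (half_pos hε)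
  linarith [hatd_le_of_mem_walkSums h.nonneg (add_mem_walkSums hs ht)]

end IsGraphPseudometric

section Separation

/-- `B` metrically separates `x` from `z`: up to any `ε > 0`, the distance `d̂(x,z)` is attained by
walks through `B`. The infimum of `d̂(x,u) + d̂(u,z)` over `u ∈ B` is spelled out with `ε` because
`sInf ∅ = 0` would let the empty set separate points at distance `0`. -/
def MetricSeparates (E : X → X → Prop) (d : X → X → ℝ) (B : Set X) (x z : X) : Prop :=
  ∀ ε > 0, ∃ u ∈ B, hatd E d x u + hatd E d u z < hatd E d x z + ε

namespace IsGraphPseudometric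

variable {E : X → X → Prop} {d : X → X → ℝ} {B C : Set X} {x y z a b u : X}

lemma Lam_le (h : IsGraphPseudometric E d) (hB : B ⊆ Vtx E) (hx : x ∈ Vtx E) (ha : a ∈ B)
    (hb : b ∈ B) : Lam E d x B ≤ hatd E d a x + hatd E d x b - hatd E d a b := by
  refine csInf_le ⟨0, ?_⟩ ⟨a, ha, b, hb, rfl⟩
  rintro _ ⟨a, ha, b, hb, rfl⟩
  exact sub_nonneg.2 (h.hatd_triangle (hB ha) hx (hB hb))

lemma Lam_add_hatd_le (h : IsGraphPseudometric E d) (hB : B ⊆ Vtx E) (hx : x ∈ Vtx E)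
    (hy : y ∈ Vtx E) (ha : a ∈ Vtx E) (hb : b ∈ Vtx E) (hxy : MetricSeparates E d B x y)
    (hxa : MetricSeparates E d B x a) :
    Lam E d x B + hatd E d a b ≤ hatd E d x a + hatd E d x y + hatd E d y b := by
  refine le_of_forall_pos_le_add fun ε hε => ?_
  obtain ⟨u, hu, hu_lt⟩ := hxa (ε / 2) (half_pos hε)
  obtain ⟨v, hv, hv_lt⟩ := hxy (ε / 2) (half_pos hε)
  have h_detour : Lam E d x B ≤ hatd E d x u + hatd E d x v - hatd E d u v :=
    h.hatd_comm x u ▸ h.Lam_le hB hx hu hv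
  have h_quad : hatd E d a b ≤ hatd E d u a + hatd E d u v + hatd E d v y + hatd E d y b :=
    calc hatd E d a b ≤ hatd E d a u + hatd E d u b := h.hatd_triangle ha (hB hu) hb
      _ ≤ hatd E d a u + (hatd E d u v + hatd E d v b) := by
        gcongr; exact h.hatd_triangle (hB hu) (hB hv) hb
      _ ≤ hatd E d a u + (hatd E d u v + (hatd E d v y + hatd E d y b)) := by
        gcongr; exact h.hatd_triangle (hB hv) hy hb
      _ = _ := by rw [h.hatd_comm a u]; ring
  linarith

lemma Lam_le_two_mul_hatd (h : IsGraphPseudometric E d) (hB : B ⊆ Vtx E) (hx : x ∈ Vtx E)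
    (hz : z ∈ Vtx E) (hxz : MetricSeparates E d B x z) : Lam E d x B ≤ 2 * hatd E d x z := by
  have h_le := h.Lam_add_hatd_le hB hx hz hz hz hxz hxz
  linarith

lemma Lam_le_two_mul_hatd_of_mem (h : IsGraphPseudometric E d) (hB : B ⊆ Vtx E)
    (hx : x ∈ Vtx E) (hu : u ∈ B) : Lam E d x B ≤ 2 * hatd E d x u := by
  have h_le := h.Lam_le hB hx hu hu
  rw [h.hatd_self, h.hatd_comm u x] at h_le
  linarith

lemma min_Lam_le_hatd (h : IsGraphPseudometric E d) (hB : B ⊆ Vtx E) (hC : C ⊆ Vtx E)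
    (hx : x ∈ Vtx E) (hy : y ∈ Vtx E) (hxy : MetricSeparates E d B x y)
    (hyB : ∀ u ∈ B, MetricSeparates E d C y u) :
    min (Lam E d x B) (Lam E d y C) ≤ hatd E d x y := by
  refine le_of_forall_pos_le_add fun ε hε => ?_
  obtain ⟨u, hu, hu_lt⟩ := hxy ε hε
  have hx_le : Lam E d x B ≤ 2 * hatd E d x u := h.Lam_le_two_mul_hatd_of_mem hB hx hu
  have hy_le : Lam E d y C ≤ 2 * hatd E d u y :=
    h.hatd_comm y u ▸ h.Lam_le_two_mul_hatd hC hy (hB hu) (hyB u hu)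
  rw [min_le_iff]
  by_contra! h_gt
  linarith

theorem min_Lam_le_hatd_sub_checkd (h : IsGraphPseudometric E d) (hB : B ⊆ Vtx E)
    (hC : C ⊆ Vtx E) (hx : x ∈ Vtx E) (hy : y ∈ Vtx E) (hxy : MetricSeparates E d B x y)
    (hyx : MetricSeparates E d C y x) (hyB : ∀ u ∈ B, MetricSeparates E d C y u)
    (h_edge : ∀ ⦃a b⦄, E a b → MetricSeparates E d B x a ∨ MetricSeparates E d C y b) :
    min (Lam E d x B) (Lam E d y C) ≤ hatd E d x y - checkd E d x y := by
  rw [le_sub_comm]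
  refine csSup_le ⟨0, Or.inl rfl⟩ ?_
  rintro _ (rfl | ⟨a, b, hab, rfl⟩)
  · exact sub_nonneg.2 (h.min_Lam_le_hatd hB hC hx hy hxy hyB)
  have ha : a ∈ Vtx E := ⟨b, hab⟩
  have hb : b ∈ Vtx E := h.right_mem_Vtx hab
  rw [le_sub_comm, h.edge_eq hab, min_le_iff]
  refine (h_edge hab).imp (fun hxa => ?_) fun hyb => ?_
  · have h_le := h.Lam_add_hatd_le hB hx hy ha hb hxy hxa
    linarith [h.hatd_comm x a]
  · have h_le := h.Lam_add_hatd_le hC hy hx hb ha hyx hyb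
    linarith [h.hatd_comm x a, h.hatd_comm x y, h.hatd_comm a b]

end IsGraphPseudometric

end Separation

/-- The pieces of the glued graph: the members of `F` together with the base `p = (Ep, wp)`, which
satisfies the gluing conditions relative to itself, so that it need not be treated separately. -/
def pieces (Ep : X → X → Prop) (wp : X → X → ℝ) (F : Set ((X → X → Prop) × (X → X → ℝ))) :
    Set ((X → X → Prop) × (X → X → ℝ)) :=
  insert (Ep, wp) F

lemma gluedEdge_iff_exists_piece {Ep : X → X → Prop} (wp : X → X → ℝ)
    {F : Set ((X → X → Prop) × (X → X → ℝ))} {x y : X} :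
    gluedEdge Ep F x y ↔ ∃ k ∈ pieces Ep wp F, k.1 x y := by
  simp only [gluedEdge, pieces, Set.exists_mem_insert]

namespace GluingSetup

variable {Ep : X → X → Prop} {wp : X → X → ℝ} {F : Set ((X → X → Prop) × (X → X → ℝ))}
  {wd : X → X → ℝ} {k l : (X → X → Prop) × (X → X → ℝ)} {x y z : X} {s : ℝ}

lemma isGraphPseudometric_piece (hs : GluingSetup Ep wp F wd) (hk : k ∈ pieces Ep wp F) :
    IsGraphPseudometric k.1 k.2 := by
  obtain rfl | hk := hk
  exacts [hs.hp, hs.hF k hk]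

lemma inter_base_nonempty (hs : GluingSetup Ep wp F wd) (hk : k ∈ pieces Ep wp F)
    (hx : x ∈ Vtx k.1) : (Vtx k.1 ∩ Vtx Ep).Nonempty := by
  obtain rfl | hk := hk
  exacts [⟨x, hx, hx⟩, hs.meet k hk]

lemma hatd_piece_eq_hatd_base (hs : GluingSetup Ep wp F wd) (hk : k ∈ pieces Ep wp F)
    (hx : x ∈ Vtx k.1 ∩ Vtx Ep) (hy : y ∈ Vtx k.1 ∩ Vtx Ep) :
    hatd k.1 k.2 x y = hatd Ep wp x y := by
  obtain rfl | hxy := eq_or_ne x y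
  · rw [(hs.isGraphPseudometric_piece hk).hatd_self, hs.hp.hatd_self]
  obtain rfl | hk := hk
  exacts [rfl, hs.agree k hk x hx y hy hxy]

lemma mem_base_of_mem_pieces (hs : GluingSetup Ep wp F wd) (hk : k ∈ pieces Ep wp F)
    (hl : l ∈ pieces Ep wp F) (hkl : k ≠ l) (hxk : x ∈ Vtx k.1) (hxl : x ∈ Vtx l.1) :
    x ∈ Vtx Ep := by
  obtain rfl | hk := hk
  · exact hxk
  obtain rfl | hl := hl
  exacts [hxl, hs.inter_sub k hk l hl hkl ⟨hxk, hxl⟩]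

lemma wd_eq_piece (hs : GluingSetup Ep wp F wd) (hk : k ∈ pieces Ep wp F) (hxy : k.1 x y) :
    wd x y = k.2 x y := by
  obtain rfl | hk := hk
  exacts [hs.wd_p hxy, hs.wd_F k hk hxy]

lemma wd_nonneg (hs : GluingSetup Ep wp F wd) ⦃x y : X⦄ (hxy : gluedEdge Ep F x y) :
    0 ≤ wd x y := by
  obtain ⟨k, hk, hxy⟩ := (gluedEdge_iff_exists_piece wp).1 hxy
  exact hs.wd_eq_piece hk hxy ▸ (hs.isGraphPseudometric_piece hk).nonneg hxy

lemma gluedEdge_symm (hs : GluingSetup Ep wp F wd) ⦃x y : X⦄ (hxy : gluedEdge Ep F x y) :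
    gluedEdge Ep F y x := by
  obtain ⟨k, hk, hxy⟩ := (gluedEdge_iff_exists_piece wp).1 hxy
  exact (gluedEdge_iff_exists_piece wp).2 ⟨k, hk, (hs.isGraphPseudometric_piece hk).symm hxy⟩

lemma wd_comm (hs : GluingSetup Ep wp F wd) ⦃x y : X⦄ (hxy : gluedEdge Ep F x y) :
    wd x y = wd y x := by
  obtain ⟨k, hk, hxy⟩ := (gluedEdge_iff_exists_piece wp).1 hxy
  have hp := hs.isGraphPseudometric_piece hk
  rw [hs.wd_eq_piece hk hxy, hs.wd_eq_piece hk (hp.symm hxy), hp.wt_symm hxy]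

lemma gluedEdge_of_piece (hk : k ∈ pieces Ep wp F) ⦃x y : X⦄ (hxy : k.1 x y) :
    gluedEdge Ep F x y :=
  (gluedEdge_iff_exists_piece wp).2 ⟨k, hk, hxy⟩

lemma Vtx_piece_subset (hk : k ∈ pieces Ep wp F) : Vtx k.1 ⊆ Vtx (gluedEdge Ep F) :=
  fun _ ⟨y, hxy⟩ => ⟨y, gluedEdge_of_piece hk hxy⟩

lemma walkSums_piece_subset (hs : GluingSetup Ep wp F wd) (hk : k ∈ pieces Ep wp F) (x y : X) :
    walkSums k.1 k.2 x y ⊆ walkSums (gluedEdge Ep F) wd x y :=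
  walkSums_mono (gluedEdge_of_piece hk) (fun _ _ => hs.wd_eq_piece hk) x y

lemma edge_piece_of_notMem_base (hs : GluingSetup Ep wp F wd) (hk : k ∈ pieces Ep wp F)
    (hx : x ∈ Vtx k.1 \ Vtx Ep) (hxy : gluedEdge Ep F x y) : k.1 x y := by
  obtain ⟨l, hl, hxy⟩ := (gluedEdge_iff_exists_piece wp).1 hxy
  obtain rfl | hkl := eq_or_ne k l
  · exact hxy
  · exact absurd (hs.mem_base_of_mem_pieces hk hl hkl hx.1 ⟨y, hxy⟩) hx.2

lemma exists_hatd_piece_add_hatd_base_le (hs : GluingSetup Ep wp F wd) (hz : z ∈ Vtx Ep)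
    (hsum : s ∈ walkSums (gluedEdge Ep F) wd x z) (hk : k ∈ pieces Ep wp F)
    (hx : x ∈ Vtx k.1) : ∃ u ∈ Vtx k.1 ∩ Vtx Ep, hatd k.1 k.2 x u + hatd Ep wp u z ≤ s := by
  induction hsum using walkSums_induction generalizing k with
  | nil =>
    have hzz := (hs.isGraphPseudometric_piece hk).hatd_self z
    exact ⟨z, ⟨hx, hz⟩, by rw [hzz, hs.hp.hatd_self, add_zero]⟩
  | cons x y s hxy _ ih =>
    obtain ⟨l, hl, hxy⟩ := (gluedEdge_iff_exists_piece wp).1 hxy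
    have hl_pm := hs.isGraphPseudometric_piece hl
    have hxl : x ∈ Vtx l.1 := ⟨y, hxy⟩
    have hyl := hl_pm.right_mem_Vtx hxy
    obtain ⟨u, hu, hu_le⟩ := ih hl hyl
    have hxu_le : hatd l.1 l.2 x u + hatd Ep wp u z ≤ wd x y + s := by
      rw [hs.wd_eq_piece hl hxy, hl_pm.edge_eq hxy]
      linarith [hl_pm.hatd_triangle hxl hyl hu.1]
    obtain rfl | hkl := eq_or_ne k l
    · exact ⟨u, hu, hxu_le⟩
    have hxp : x ∈ Vtx Ep := hs.mem_base_of_mem_pieces hk hl hkl hx hxl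
    refine ⟨x, ⟨hx, hxp⟩, ?_⟩
    rw [(hs.isGraphPseudometric_piece hk).hatd_self, zero_add]
    rw [hs.hatd_piece_eq_hatd_base hl ⟨hxl, hxp⟩ hu] at hxu_le
    exact (hs.hp.hatd_triangle hxp hu.2 hz).trans hxu_le

lemma hatd_piece_le_of_mem_base (hs : GluingSetup Ep wp F wd) (hk : k ∈ pieces Ep wp F)
    (hx : x ∈ Vtx k.1) (hz : z ∈ Vtx k.1 ∩ Vtx Ep)
    (hsum : s ∈ walkSums (gluedEdge Ep F) wd x z) : hatd k.1 k.2 x z ≤ s := by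
  obtain ⟨u, hu, hu_le⟩ := hs.exists_hatd_piece_add_hatd_base_le hz.2 hsum hk hx
  rw [← hs.hatd_piece_eq_hatd_base hk hu hz] at hu_le
  exact ((hs.isGraphPseudometric_piece hk).hatd_triangle hx hu.1 hz.1).trans hu_le

lemma mem_walkSums_piece_or_exists_exit (hs : GluingSetup Ep wp F wd)
    (hk : k ∈ pieces Ep wp F) (hx : x ∈ Vtx k.1)
    (hsum : s ∈ walkSums (gluedEdge Ep F) wd x z) :
    (z ∈ Vtx k.1 ∧ s ∈ walkSums k.1 k.2 x z) ∨
      ∃ u ∈ Vtx k.1 ∩ Vtx Ep, ∃ s₁ ∈ walkSums k.1 k.2 x u,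
        ∃ s₂ ∈ walkSums (gluedEdge Ep F) wd u z, s = s₁ + s₂ := by
  induction hsum using walkSums_induction with
  | nil => exact .inl ⟨hx, zero_mem_walkSums z⟩
  | cons x y s hxy hsum ih =>
    by_cases hxp : x ∈ Vtx Ep
    · exact .inr ⟨x, ⟨hx, hxp⟩, 0, zero_mem_walkSums x, _, cons_mem_walkSums hxy hsum,
        (zero_add _).symm⟩
    have hxy_k : k.1 x y := hs.edge_piece_of_notMem_base hk ⟨hx, hxp⟩ hxy
    rw [hs.wd_eq_piece hk hxy_k]
    obtain ⟨hz, hsum_k⟩ | ⟨u, hu, s₁, hs₁, s₂, hs₂, rfl⟩ :=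
      ih ((hs.isGraphPseudometric_piece hk).right_mem_Vtx hxy_k)
    · exact .inl ⟨hz, cons_mem_walkSums hxy_k hsum_k⟩
    · exact .inr ⟨u, hu, _, cons_mem_walkSums hxy_k hs₁, s₂, hs₂, (add_assoc _ _ _).symm⟩

lemma hatd_piece_le_of_mem_walkSums (hs : GluingSetup Ep wp F wd) (hk : k ∈ pieces Ep wp F)
    (hx : x ∈ Vtx k.1) (hz : z ∈ Vtx k.1) (hsum : s ∈ walkSums (gluedEdge Ep F) wd x z) :
    hatd k.1 k.2 x z ≤ s := by
  have hk_pm := hs.isGraphPseudometric_piece hk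
  obtain ⟨-, hsum_k⟩ | ⟨u, hu, s₁, hs₁, s₂, hs₂, rfl⟩ :=
    hs.mem_walkSums_piece_or_exists_exit hk hx hsum
  · exact hatd_le_of_mem_walkSums hk_pm.nonneg hsum_k
  have hzu : hatd k.1 k.2 z u ≤ s₂ := hs.hatd_piece_le_of_mem_base hk hz hu
    (walkSums_subset_swap hs.gluedEdge_symm hs.wd_comm u z hs₂)
  calc hatd k.1 k.2 x z ≤ hatd k.1 k.2 x u + hatd k.1 k.2 u z := hk_pm.hatd_triangle hx hu.1 hz
    _ ≤ s₁ + s₂ := add_le_add (hatd_le_of_mem_walkSums hk_pm.nonneg hs₁)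
      (hk_pm.hatd_comm u z ▸ hzu)

lemma wd_eq_hatd (hs : GluingSetup Ep wp F wd) ⦃x y : X⦄ (hxy : gluedEdge Ep F x y) :
    wd x y = hatd (gluedEdge Ep F) wd x y := by
  refine le_antisymm ?_ (hatd_le_of_mem_walkSums hs.wd_nonneg (edge_mem_walkSums hxy))
  refine le_csInf ⟨_, edge_mem_walkSums hxy⟩ fun s hsum => ?_
  obtain ⟨k, hk, hxy⟩ := (gluedEdge_iff_exists_piece wp).1 hxy
  have hk_pm := hs.isGraphPseudometric_piece hk
  rw [hs.wd_eq_piece hk hxy, hk_pm.edge_eq hxy]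
  exact hs.hatd_piece_le_of_mem_walkSums hk ⟨y, hxy⟩ (hk_pm.right_mem_Vtx hxy) hsum

lemma exists_base_reflTransGen (hs : GluingSetup Ep wp F wd) (hx : x ∈ Vtx (gluedEdge Ep F)) :
    ∃ u ∈ Vtx Ep, Relation.ReflTransGen (gluedEdge Ep F) x u := by
  obtain ⟨y, hxy⟩ := hx
  obtain ⟨k, hk, hxy⟩ := (gluedEdge_iff_exists_piece wp).1 hxy
  obtain ⟨u, huk, hup⟩ := hs.inter_base_nonempty hk ⟨y, hxy⟩
  have hxu := (hs.isGraphPseudometric_piece hk).connected x ⟨y, hxy⟩ u huk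
  exact ⟨u, hup, .mono (gluedEdge_of_piece hk) x u (joined_iff_reflTransGen.1 hxu)⟩

lemma joined_gluedEdge (hs : GluingSetup Ep wp F wd) (hx : x ∈ Vtx (gluedEdge Ep F))
    (hy : y ∈ Vtx (gluedEdge Ep F)) : Joined (gluedEdge Ep F) x y := by
  obtain ⟨u, hu, hxu⟩ := hs.exists_base_reflTransGen hx
  obtain ⟨v, hv, hyv⟩ := hs.exists_base_reflTransGen hy
  have huv : Relation.ReflTransGen (gluedEdge Ep F) u v :=
    .mono (fun _ _ => .inl) u v (joined_iff_reflTransGen.1 (hs.hp.connected u hu v hv))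
  have : Std.Symm (gluedEdge Ep F) := ⟨hs.gluedEdge_symm⟩
  exact joined_iff_reflTransGen.2 ((hxu.trans huv).trans (symm hyv))

theorem isGraphPseudometric (hs : GluingSetup Ep wp F wd) :
    IsGraphPseudometric (gluedEdge Ep F) wd where
  symm := hs.gluedEdge_symm
  irrefl a ha := by
    obtain ⟨k, hk, ha⟩ := (gluedEdge_iff_exists_piece wp).1 ha
    exact (hs.isGraphPseudometric_piece hk).irrefl a ha
  wt_symm := hs.wd_comm
  nonneg := hs.wd_nonneg
  connected _ hx _ hy := hs.joined_gluedEdge hx hy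
  edge_eq := hs.wd_eq_hatd

lemma exists_exit_of_notMem (hs : GluingSetup Ep wp F wd) (hk : k ∈ pieces Ep wp F)
    (hx : x ∈ Vtx k.1) (hz : z ∉ Vtx k.1 \ Vtx Ep)
    (hsum : s ∈ walkSums (gluedEdge Ep F) wd x z) :
    ∃ u ∈ Vtx k.1 ∩ Vtx Ep, ∃ s₁ ∈ walkSums (gluedEdge Ep F) wd x u,
      ∃ s₂ ∈ walkSums (gluedEdge Ep F) wd u z, s = s₁ + s₂ := by
  obtain ⟨hzk, -⟩ | ⟨u, hu, s₁, hs₁, h_rest⟩ := hs.mem_walkSums_piece_or_exists_exit hk hx hsum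
  · have hzp : z ∈ Vtx Ep := not_not.1 fun hzp => hz ⟨hzk, hzp⟩
    exact ⟨z, ⟨hzk, hzp⟩, s, hsum, 0, zero_mem_walkSums z, (add_zero s).symm⟩
  · exact ⟨u, hu, s₁, hs.walkSums_piece_subset hk x u hs₁, h_rest⟩

theorem metricSeparates (hs : GluingSetup Ep wp F wd) (hk : k ∈ pieces Ep wp F)
    (hx : x ∈ Vtx k.1) (hz : z ∈ Vtx (gluedEdge Ep F)) (hzk : z ∉ Vtx k.1 \ Vtx Ep) :
    MetricSeparates (gluedEdge Ep F) wd (Vtx k.1 ∩ Vtx Ep) x z := by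
  intro ε hε
  obtain ⟨s, hsum, hsum_lt⟩ :=
    hs.isGraphPseudometric.exists_mem_walkSums_lt (Vtx_piece_subset hk hx) hz hε
  obtain ⟨u, hu, s₁, hs₁, s₂, hs₂, rfl⟩ := hs.exists_exit_of_notMem hk hx hzk hsum
  exact ⟨u, hu, (add_le_add (hatd_le_of_mem_walkSums hs.wd_nonneg hs₁)
    (hatd_le_of_mem_walkSums hs.wd_nonneg hs₂)).trans_lt hsum_lt⟩

end GluingSetup

/-- In the gluing setup, for distinct `f, g ∈ 𝔉`, `x ∈ V_f \ V_p`
and `y ∈ V_g \ V_p`: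
`d̂(x,y) − ď(x,y) ≥ min {Λ(x; V_f ∩ V_p), Λ(y; V_p ∩ V_g)}`. -/
theorem gluing_floppiness_bound₂ (Ep : X → X → Prop) (wp : X → X → ℝ)
    (F : Set ((X → X → Prop) × (X → X → ℝ))) (wd : X → X → ℝ)
    (hs : GluingSetup Ep wp F wd)
    (f g : (X → X → Prop) × (X → X → ℝ)) (hf : f ∈ F) (hg : g ∈ F) (hfg : f ≠ g)
    (x : X) (hx : x ∈ Vtx f.1 \ Vtx Ep) (y : X) (hy : y ∈ Vtx g.1 \ Vtx Ep) :
    min (Lam (gluedEdge Ep F) wd x (Vtx f.1 ∩ Vtx Ep))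
        (Lam (gluedEdge Ep F) wd y (Vtx Ep ∩ Vtx g.1)) ≤
      hatd (gluedEdge Ep F) wd x y - checkd (gluedEdge Ep F) wd x y := by
  have h := hs.isGraphPseudometric
  have hfP : f ∈ pieces Ep wp F := .inr hf
  have hgP : g ∈ pieces Ep wp F := .inr hg
  have hfV := GluingSetup.Vtx_piece_subset hfP
  have hgV := GluingSetup.Vtx_piece_subset hgP
  have notMem_g {z : X} (hzf : z ∈ Vtx f.1) : z ∉ Vtx g.1 \ Vtx Ep := fun hzg =>
    hzg.2 (hs.inter_sub f hf g hg hfg ⟨hzf, hzg.1⟩)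
  have hxy := hs.metricSeparates hfP hx.1 (hgV hy.1) fun hyf => notMem_g hyf.1 hy
  have hyx := hs.metricSeparates hgP hy.1 (hfV hx.1) (notMem_g hx.1)
  rw [Set.inter_comm (Vtx Ep)]
  refine h.min_Lam_le_hatd_sub_checkd (Set.inter_subset_left.trans hfV)
    (Set.inter_subset_left.trans hgV) (hfV hx.1) (hgV hy.1) hxy hyx
    (fun u hu => hs.metricSeparates hgP hy.1 (hfV hu.1) (notMem_g hu.1)) fun a b hab => ?_
  by_cases ha : a ∈ Vtx f.1 \ Vtx Ep
  · have hbf : b ∈ Vtx f.1 :=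
      (hs.hF f hf).right_mem_Vtx (hs.edge_piece_of_notMem_base hfP ha hab)
    exact .inr (hs.metricSeparates hgP hy.1 (h.right_mem_Vtx hab) (notMem_g hbf))
  · exact .inl (hs.metricSeparates hfP hx.1 ⟨b, hab⟩ ha)

end GraphMetricPaper
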